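/- Let n ≥ 1, m > n, and let p : ℝ^n → [1,∞) be a measurable exponent with 2 ≤ p⁻ and p⁺ < ∞. Define ζ(t) = 2/p⁻ for 0 < t ≤ 1 and ζ(t) = 2/p⁺ for t > 1, and define ς(t) = (p⁻/p⁺)(1 − 1/p⁻) + ζ(t)(1 − p⁻/p⁺) if either [0 < t ≤ 1 and 2 ≤ p⁻ ≤ 3] or [t > 1 and 1 − 1/p⁻ > 2/p⁺], and ς(t) = 1 − 1/p⁻ if either [0 < t ≤ 1 and p⁻ > 3] or [t > 1 and 1 − 1/p⁻ ≤ 2/p⁺]. Then there exists a constant C > 0, depending only on m, n and p, such that for every t > 0 and all u, v ∈ L^{p(·)}(ℝ^n) ∩ L^2(ℝ^n), ‖η_{t,m} * (uv)‖_{L^{p(·)}(ℝ^n)∩L^2(ℝ^n)} ≤ C max(t^{−nς(t)}, t^{−n/2}) ‖u‖_{L^{p(·)}(ℝ^n)∩L^2(ℝ^n)} ‖v‖_{L^{p(·)}(ℝ^n)∩L^2(ℝ^n)}. -/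

import Mathlib

open MeasureTheory Filter Real
open scoped ENNReal

noncomputable section

/-- Euclidean space `ℝⁿ`. -/
abbrev Esp (n : ℕ) := EuclideanSpace ℝ (Fin n)

/-- The variable exponent modular `ρ_{p(·)}(f) = ∫_{ℝⁿ} |f(x)|^{p(x)} dx`. -/
def vMod (n : ℕ) (p : Esp n → ℝ) (f : Esp n → ℝ) : ℝ≥0∞ :=
  ∫⁻ x, (ENNReal.ofReal |f x|) ^ (p x) ∂volume

/-- The Luxemburg norm `‖f‖_{L^{p(·)}} = inf {λ > 0 : ρ_{p(·)}(f/λ) ≤ 1}`. -/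
def luxNorm (n : ℕ) (p : Esp n → ℝ) (f : Esp n → ℝ) : ℝ :=
  sInf {lam : ℝ | 0 < lam ∧ vMod n p (fun x => f x / lam) ≤ 1}

/-- Membership in the variable exponent Lebesgue space `L^{p(·)}(ℝⁿ)`. -/
def MemVLp (n : ℕ) (p : Esp n → ℝ) (f : Esp n → ℝ) : Prop :=
  AEMeasurable f volume ∧ ∃ lam : ℝ, 0 < lam ∧ vMod n p (fun x => f x / lam) ≤ 1

/-- Global log-Hölder continuity of `1/p` with decay value `l` (representing `l = 1/p_∞`). -/
def IsLogHolder (n : ℕ) (p : Esp n → ℝ) (l : ℝ) : Prop :=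
  ∃ c : ℝ, 0 < c ∧
    (∀ x y : Esp n, |1 / p x - 1 / p y| ≤ c / Real.log (Real.exp 1 + 1 / ‖x - y‖)) ∧
    (∀ x : Esp n, |1 / p x - l| ≤ c / Real.log (Real.exp 1 + ‖x‖))

/-- The kernel `η_{t,m}(x) = t^{-n} (1 + |x|/t)^{-m}`. -/
def etaKer (n : ℕ) (t m : ℝ) (x : Esp n) : ℝ :=
  t ^ (-(n : ℝ)) * (1 + ‖x‖ / t) ^ (-m)

/-- Convolution `(u * v)(x) = ∫ u(x - y) v(y) dy`. -/
def convR (n : ℕ) (u v : Esp n → ℝ) (x : Esp n) : ℝ :=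
  ∫ y, u (x - y) * v y ∂volume

/-!
Let `Φ = η * |g|^r` with `r ≥ 1`. If `η` has mass at most `1`, Jensen's inequality gives
`|η * g|^r ≤ Φ`. If moreover `η ≤ s` and `∫ |g|^r ≤ 1`, then `Φ ≤ s` and `∫ Φ ≤ 1`, so for
`q(x) ≥ r`,
`|η * g|^q ≤ Φ^(q/r) ≤ s^(q/r - 1) Φ = (s^(1/r - 1/q))^q Φ`.
Integrating, the `L^{q(·)}` norm of `η * g` is at most any uniform bound for `s^(1/r - 1/q(x))`.
For `g = uv` the hypothesis on `g` follows from the Cauchy–Schwarz inequality, because `L^{2r}` lies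
between `L^2` and `L^{p(·)}` as soon as `2 ≤ 2r ≤ p⁻`.
Here `s` is of order `t^{-n}`, and the choices are `r = p⁻/2` for `t ≤ 1` and `r = 1` for `t > 1`.
-/

section Convolution

lemma rpow_le_rpow_mul_of_rpow_le {z w s T : ℝ≥0∞} {r q : ℝ} (hr : 0 < r) (hrq : r ≤ q)
    (hzw : z ^ r ≤ w) (hws : w ≤ s) (hsT : s ^ (1 / r - 1 / q) ≤ T) : z ^ q ≤ T ^ q * w := by
  have hq : 0 < q := hr.trans_le hrq
  have hqr : 0 ≤ q / r - 1 := sub_nonneg.2 ((one_le_div hr).2 hrq)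
  calc z ^ q = (z ^ r) ^ (q / r) := by rw [← ENNReal.rpow_mul, mul_div_cancel₀ q hr.ne']
    _ ≤ w ^ (q / r) := by gcongr
    _ = w ^ (q / r - 1) * w := by
      conv_rhs => rw [← ENNReal.rpow_one w, ← ENNReal.rpow_mul, one_mul]
      rw [← ENNReal.rpow_add_of_nonneg _ _ hqr zero_le_one, sub_add_cancel]
    _ ≤ s ^ (q / r - 1) * w := by gcongr
    _ = (s ^ (1 / r - 1 / q)) ^ q * w := by
      rw [← ENNReal.rpow_mul]
      congr 2
      field_simp
    _ ≤ T ^ q * w := by gcongr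

variable {α : Type*} [MeasurableSpace α] {μ : Measure α}

lemma rpow_lintegral_le_lintegral_rpow (hμ : μ Set.univ ≤ 1) {f : α → ℝ≥0∞}
    (hf : AEMeasurable f μ) {r : ℝ} (hr : 1 ≤ r) :
    (∫⁻ x, f x ∂μ) ^ r ≤ ∫⁻ x, f x ^ r ∂μ := by
  have hr0 : 0 < r := by linarith
  have mass_le_one : μ Set.univ ^ (1 / 1 - 1 / r) ≤ 1 :=
    ENNReal.rpow_le_one hμ (sub_nonneg.2 (one_div_le_one_div_of_le one_pos hr))
  have jensen : ∫⁻ x, f x ∂μ ≤ (∫⁻ x, f x ^ r ∂μ) ^ r⁻¹ := by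
    simpa [eLpNorm'_eq_lintegral_enorm] using
      (eLpNorm'_le_eLpNorm'_mul_rpow_measure_univ one_pos hr hf.aestronglyMeasurable).trans
        (mul_le_of_le_one_right' mass_le_one)
  exact (ENNReal.le_rpow_inv_iff hr0).1 jensen

lemma rpow_lintegral_mul_le_lintegral_mul_rpow {k f : α → ℝ≥0∞} (hk : AEMeasurable k μ)
    (hk1 : ∫⁻ x, k x ∂μ ≤ 1) (hf : AEMeasurable f μ) {r : ℝ} (hr : 1 ≤ r) :
    (∫⁻ x, k x * f x ∂μ) ^ r ≤ ∫⁻ x, k x * f x ^ r ∂μ := by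
  have hfk : AEMeasurable f (μ.withDensity k) := hf.mono_ac (withDensity_absolutelyContinuous μ k)
  have jensen := rpow_lintegral_le_lintegral_rpow (μ := μ.withDensity k) (by simpa) hfk hr
  rwa [lintegral_withDensity_eq_lintegral_mul₀ hk hf,
    lintegral_withDensity_eq_lintegral_mul₀ hk (hf.pow_const r)] at jensen

variable {G : Type*} [AddCommGroup G] [MeasurableSpace G] [MeasurableAdd₂ G] [MeasurableNeg G]
  {ν : Measure G} [ν.IsAddLeftInvariant]

lemma lconvolution_le_mul_lintegral [ν.IsNegInvariant] {k f : G → ℝ≥0∞} {s : ℝ≥0∞}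
    (hk : ∀ x, k x ≤ s) (hf : AEMeasurable f ν) (x : G) : (k ⋆ₗ[ν] f) x ≤ s * ∫⁻ y, f y ∂ν := by
  rw [lconvolution_comm, lconvolution_def, mul_comm, ← lintegral_mul_const'' _ hf]
  gcongr
  exact hk _

variable [SFinite ν]

lemma lintegral_lconvolution {f g : G → ℝ≥0∞} (hf : AEMeasurable f ν) (hg : AEMeasurable g ν) :
    ∫⁻ x, (f ⋆ₗ[ν] g) x ∂ν = (∫⁻ x, f x ∂ν) * ∫⁻ x, g x ∂ν := by
  simp only [lconvolution_def]
  rw [lintegral_lintegral_swap (by fun_prop), ← lintegral_mul_const'' _ hf]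
  refine lintegral_congr fun y => ?_
  rw [lintegral_const_mul'' _ (by fun_prop), lintegral_add_left_eq_self g (-y)]

lemma lconvolution_rpow_le {k f : G → ℝ≥0∞} (hk : AEMeasurable k ν) (hk1 : ∫⁻ x, k x ∂ν ≤ 1)
    (hf : AEMeasurable f ν) {r : ℝ} (hr : 1 ≤ r) (x : G) :
    (k ⋆ₗ[ν] f) x ^ r ≤ (k ⋆ₗ[ν] fun y => f y ^ r) x :=
  rpow_lintegral_mul_le_lintegral_mul_rpow hk hk1 (by fun_prop) hr

lemma lintegral_lconvolution_div_rpow_le_one [ν.IsNegInvariant] {k f : G → ℝ≥0∞} {s T : ℝ≥0∞}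
    {r : ℝ} {q : G → ℝ} (hk : AEMeasurable k ν) (hk1 : ∫⁻ x, k x ∂ν ≤ 1)
    (hks : ∀ x, k x ≤ s) (hf : AEMeasurable f ν) (hr : 1 ≤ r) (hf1 : ∫⁻ x, f x ^ r ∂ν ≤ 1)
    (hq : ∀ᵐ x ∂ν, r ≤ q x ∧ s ^ (1 / r - 1 / q x) ≤ T) :
    ∫⁻ x, ((k ⋆ₗ[ν] f) x / T) ^ q x ∂ν ≤ 1 := by
  have hr0 : 0 < r := by linarith
  set w := k ⋆ₗ[ν] fun y => f y ^ r
  have hw_le (x : G) : w x ≤ s :=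
    (lconvolution_le_mul_lintegral hks (hf.pow_const r) x).trans (mul_le_of_le_one_right' hf1)
  have pointwise : ∀ᵐ x ∂ν, ((k ⋆ₗ[ν] f) x / T) ^ q x ≤ w x := by
    filter_upwards [hq] with x ⟨hrq, hsT⟩
    rw [ENNReal.div_rpow_of_nonneg _ _ (hr0.le.trans hrq)]
    exact ENNReal.div_le_of_le_mul' <|
      rpow_le_rpow_mul_of_rpow_le hr0 hrq (lconvolution_rpow_le hk hk1 hf hr x) (hw_le x) hsT
  calc ∫⁻ x, ((k ⋆ₗ[ν] f) x / T) ^ q x ∂ν ≤ ∫⁻ x, w x ∂ν := lintegral_mono_ae pointwise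
    _ = (∫⁻ x, k x ∂ν) * ∫⁻ x, f x ^ r ∂ν := lintegral_lconvolution hk (hf.pow_const r)
    _ ≤ 1 := mul_le_one' hk1 hf1

end Convolution

section VariableExponent

variable {n : ℕ} {p q : Esp n → ℝ} {f u v : Esp n → ℝ} {a : ℝ}

lemma vMod_eq_lintegral_enorm (p f : Esp n → ℝ) : vMod n p f = ∫⁻ x, ‖f x‖ₑ ^ p x := by
  simp only [vMod, Real.enorm_eq_ofReal_abs]

lemma luxNorm_le_of_vMod_div_le_one (ha : 0 < a) (h : vMod n p (fun x => f x / a) ≤ 1) :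
    luxNorm n p f ≤ a :=
  csInf_le ⟨0, fun _ h => h.1.le⟩ ⟨ha, h⟩

lemma luxNorm_nonneg (p f : Esp n → ℝ) : 0 ≤ luxNorm n p f :=
  Real.sInf_nonneg fun _ h => h.1.le

lemma vMod_div_le_one_of_luxNorm_lt (hp : ∀ᵐ x, 0 ≤ p x) (hf : MemVLp n p f)
    (ha : luxNorm n p f < a) : vMod n p (fun x => f x / a) ≤ 1 := by
  obtain ⟨l, ⟨hl0, hl⟩, hla⟩ := exists_lt_of_csInf_lt hf.2 ha
  refine (lintegral_mono_ae ?_).trans hl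
  filter_upwards [hp] with x hx
  rw [abs_div, abs_div, abs_of_pos hl0, abs_of_pos (hl0.trans hla)]
  gcongr

/-- The norm of `L^{p(·)}(ℝⁿ) ∩ L²(ℝⁿ)`. -/
def interNorm (n : ℕ) (p f : Esp n → ℝ) : ℝ :=
  max (luxNorm n p f) (luxNorm n (fun _ => 2) f)

lemma interNorm_nonneg (p f : Esp n → ℝ) : 0 ≤ interNorm n p f :=
  (luxNorm_nonneg p f).trans (le_max_left _ _)

lemma lintegral_enorm_rpow_le_vMod_add_vMod {b c : ℝ} (hf : AEMeasurable f) (hbc : b ≤ c)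
    (hcp : ∀ᵐ x, c ≤ p x) :
    ∫⁻ x, ‖f x‖ₑ ^ c ≤ vMod n (fun _ => b) f + vMod n p f := by
  rw [vMod_eq_lintegral_enorm, vMod_eq_lintegral_enorm, ← lintegral_add_left' (by fun_prop)]
  refine lintegral_mono_ae ?_
  filter_upwards [hcp] with x hx
  rcases le_total ‖f x‖ₑ 1 with h | h
  · exact (ENNReal.rpow_le_rpow_of_exponent_ge h hbc).trans le_self_add
  · exact (ENNReal.rpow_le_rpow_of_exponent_le h hx).trans le_add_self

lemma lintegral_enorm_rpow_le_two_of_interNorm_lt {c : ℝ} (hc : 2 ≤ c) (hcp : ∀ᵐ x, c ≤ p x)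
    (hf : MemVLp n p f) (hf2 : MemVLp n (fun _ => 2) f) (ha : interNorm n p f < a) :
    ∫⁻ x, ‖f x / a‖ₑ ^ c ≤ 2 := by
  obtain ⟨hap, ha2⟩ := max_lt_iff.1 ha
  calc ∫⁻ x, ‖f x / a‖ₑ ^ c
      ≤ vMod n (fun _ => 2) (fun x => f x / a) + vMod n p (fun x => f x / a) :=
        lintegral_enorm_rpow_le_vMod_add_vMod (hf.1.div_const a) hc hcp
    _ ≤ 1 + 1 := by
        gcongr
        · exact vMod_div_le_one_of_luxNorm_lt (.of_forall fun _ => zero_le_two) hf2 ha2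
        · exact vMod_div_le_one_of_luxNorm_lt (hcp.mono fun x hx => by linarith) hf hap
    _ = 2 := one_add_one_eq_two

lemma lintegral_enorm_mul_div_two_rpow_le_one {r : ℝ} (hr : 1 ≤ r)
    (hu : AEMeasurable u) (hv : AEMeasurable v)
    (hu2 : ∫⁻ x, ‖u x‖ₑ ^ (2 * r) ≤ 2) (hv2 : ∫⁻ x, ‖v x‖ₑ ^ (2 * r) ≤ 2) :
    ∫⁻ x, ‖u x * v x / 2‖ₑ ^ r ≤ 1 := by
  have sq_rpow (w : Esp n → ℝ) (x : Esp n) : (‖w x‖ₑ ^ r) ^ (2 : ℝ) = ‖w x‖ₑ ^ (2 * r) := by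
    rw [← ENNReal.rpow_mul, mul_comm]
  have cauchy_schwarz : ∫⁻ x, ‖u x‖ₑ ^ r * ‖v x‖ₑ ^ r ≤ 2 := by
    calc ∫⁻ x, ‖u x‖ₑ ^ r * ‖v x‖ₑ ^ r
        ≤ (∫⁻ x, ‖u x‖ₑ ^ (2 * r)) ^ (1 / 2 : ℝ) * (∫⁻ x, ‖v x‖ₑ ^ (2 * r)) ^ (1 / 2 : ℝ) := by
          simpa only [sq_rpow, Pi.mul_apply] using
            ENNReal.lintegral_mul_le_Lp_mul_Lq volume Real.HolderConjugate.two_two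
              (hu.enorm.pow_const r) (hv.enorm.pow_const r)
      _ ≤ 2 ^ (1 / 2 : ℝ) * 2 ^ (1 / 2 : ℝ) := by gcongr
      _ = 2 := by
          rw [← ENNReal.rpow_add_of_nonneg _ _ (by norm_num) (by norm_num), add_halves,
            ENNReal.rpow_one]
  have two_rpow : (2 : ℝ≥0∞) ≤ 2 ^ r := by
    simpa using ENNReal.rpow_le_rpow_of_exponent_le one_le_two hr
  calc ∫⁻ x, ‖u x * v x / 2‖ₑ ^ r = ∫⁻ x, ‖u x‖ₑ ^ r * ‖v x‖ₑ ^ r / 2 ^ r := by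
        refine lintegral_congr fun x => ?_
        rw [div_eq_mul_inv, enorm_mul, enorm_mul, enorm_inv two_ne_zero, ← div_eq_mul_inv,
          ENNReal.div_rpow_of_nonneg _ _ (by linarith),
          ENNReal.mul_rpow_of_nonneg _ _ (by linarith), Real.enorm_of_nonneg zero_le_two,
          ENNReal.ofReal_ofNat]
    _ = (∫⁻ x, ‖u x‖ₑ ^ r * ‖v x‖ₑ ^ r) / 2 ^ r := by
        simp only [div_eq_mul_inv]
        rw [lintegral_mul_const'' _ (by fun_prop)]
    _ ≤ 1 := ENNReal.div_le_of_le_mul (by simpa using cauchy_schwarz.trans two_rpow)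

lemma enorm_convR_le_lconvolution (k g : Esp n → ℝ) (x : Esp n) :
    ‖convR n k g x‖ₑ ≤ ((fun y => ‖k y‖ₑ) ⋆ₗ fun y => ‖g y‖ₑ) x := by
  rw [lconvolution_comm, lconvolution_def]
  refine (enorm_integral_le_lintegral_enorm _).trans_eq (lintegral_congr fun y => ?_)
  rw [enorm_mul, mul_comm, neg_add_eq_sub]

lemma convR_div_div (k g : Esp n → ℝ) (c d : ℝ) (x : Esp n) :
    convR n (fun y => k y / c) (fun y => g y / d) x = convR n k g x / (c * d) := by
  simp only [convR, div_mul_div_comm, integral_div]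

variable {k g : Esp n → ℝ} {s A T r : ℝ}

lemma vMod_convR_div_le_one (hk : Measurable k) (hk1 : ∫⁻ x, ‖k x‖ₑ ≤ 1) (hks : ∀ x, |k x| ≤ s)
    (hg : AEMeasurable g) (hr : 1 ≤ r) (hg1 : ∫⁻ x, ‖g x‖ₑ ^ r ≤ 1) (hT : 0 < T)
    (hq : ∀ᵐ x, r ≤ q x ∧ s ^ (1 / r - 1 / q x) ≤ T) :
    vMod n q (fun x => convR n k g x / T) ≤ 1 := by
  have hs : 0 ≤ s := (abs_nonneg _).trans (hks 0)
  have hq' : ∀ᵐ x, r ≤ q x ∧ ENNReal.ofReal s ^ (1 / r - 1 / q x) ≤ ENNReal.ofReal T := by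
    filter_upwards [hq] with x ⟨hrq, hsT⟩
    have hexp : 0 ≤ 1 / r - 1 / q x := sub_nonneg.2 (one_div_le_one_div_of_le (by linarith) hrq)
    exact ⟨hrq, ENNReal.ofReal_rpow_of_nonneg hs hexp ▸ ENNReal.ofReal_le_ofReal hsT⟩
  have young := lintegral_lconvolution_div_rpow_le_one (s := ENNReal.ofReal s)
    hk.enorm.aemeasurable hk1
    (fun x => Real.enorm_eq_ofReal_abs (k x) ▸ ENNReal.ofReal_le_ofReal (hks x))
    hg.enorm hr hg1 hq'
  rw [vMod_eq_lintegral_enorm]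
  refine (lintegral_mono_ae ?_).trans young
  filter_upwards [hq] with x ⟨hrq, _⟩
  have hTe : ‖T‖ₑ = ENNReal.ofReal T := Real.enorm_of_nonneg hT.le
  rw [div_eq_mul_inv, enorm_mul, enorm_inv hT.ne', hTe, ← div_eq_mul_inv]
  gcongr
  · linarith
  · exact enorm_convR_le_lconvolution k g x

lemma luxNorm_convR_mul_le (hk : Measurable k) (hA : 1 ≤ A) (hkA : ∫⁻ x, ‖k x‖ₑ ≤ ENNReal.ofReal A)
    (hks : ∀ x, |k x| ≤ s) (hr : 1 ≤ r) (hrp : ∀ᵐ x, 2 * r ≤ p x) (hT : 0 < T)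
    (hq : ∀ᵐ x, r ≤ q x ∧ s ^ (1 / r - 1 / q x) ≤ T)
    (hu : MemVLp n p u) (hu2 : MemVLp n (fun _ => 2) u)
    (hv : MemVLp n p v) (hv2 : MemVLp n (fun _ => 2) v) :
    luxNorm n q (convR n k fun x => u x * v x) ≤
      2 * A * T * interNorm n p u * interNorm n p v := by
  have hA0 : 0 < A := by linarith
  rw [mul_assoc, ← div_le_iff₀' (by positivity)]
  refine le_mul_of_forall_lt₀ fun a ha b hb => ?_
  have ha0 : 0 < a := (interNorm_nonneg p u).trans_lt ha
  have hb0 : 0 < b := (interNorm_nonneg p v).trans_lt hb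
  rw [div_le_iff₀' (by positivity)]
  have mass_le_one : ∫⁻ x, ‖k x / A‖ₑ ≤ 1 := by
    simp only [div_eq_mul_inv, enorm_mul, enorm_inv hA0.ne', Real.enorm_of_nonneg hA0.le]
    rw [lintegral_mul_const _ hk.enorm, ← div_eq_mul_inv]
    exact ENNReal.div_le_of_le_mul (by rwa [one_mul])
  have sup_le (x : Esp n) : |k x / A| ≤ s := by
    rw [abs_div, abs_of_pos hA0]
    exact (div_le_self (abs_nonneg _) hA).trans (hks x)
  have hua : AEMeasurable fun x => u x / a := hu.1.div_const a
  have hvb : AEMeasurable fun x => v x / b := hv.1.div_const b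
  have product_le_one : ∫⁻ x, ‖u x / a * (v x / b) / 2‖ₑ ^ r ≤ 1 :=
    lintegral_enorm_mul_div_two_rpow_le_one hr hua hvb
      (lintegral_enorm_rpow_le_two_of_interNorm_lt (by linarith) hrp hu hu2 ha)
      (lintegral_enorm_rpow_le_two_of_interNorm_lt (by linarith) hrp hv hv2 hb)
  have normalized := vMod_convR_div_le_one (hk.div_const A) mass_le_one sup_le
    ((hua.mul hvb).div_const 2) hr product_le_one hT hq
  refine luxNorm_le_of_vMod_div_le_one (by positivity) ?_
  simp only [Pi.mul_def, div_mul_div_comm, div_div, convR_div_div] at normalized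
  convert normalized using 3
  ring

end VariableExponent

section Kernel

variable {n : ℕ} {t m : ℝ}

lemma measurable_etaKer (n : ℕ) (t m : ℝ) : Measurable (etaKer n t m) := by
  unfold etaKer; fun_prop

lemma abs_etaKer_le (ht : 0 < t) (hm : 0 ≤ m) (x : Esp n) : |etaKer n t m x| ≤ t ^ (-(n : ℝ)) := by
  have decay_le_one : (1 + ‖x‖ / t) ^ (-m) ≤ 1 :=
    Real.rpow_le_one_of_one_le_of_nonpos (le_add_of_nonneg_right (by positivity)) (by linarith)
  rw [etaKer, abs_of_nonneg (by positivity)]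
  exact mul_le_of_le_one_right (by positivity) decay_le_one

lemma lintegral_enorm_etaKer (n : ℕ) (m : ℝ) (ht : 0 < t) :
    ∫⁻ x, ‖etaKer n t m x‖ₑ = ∫⁻ x : Esp n, ‖(1 + ‖x‖) ^ (-m)‖ₑ := by
  have hmap := Measure.map_addHaar_smul (volume : Measure (Esp n)) (inv_ne_zero ht.ne')
  have scaling_factor : t ^ (-(n : ℝ)) * |(t⁻¹ ^ Module.finrank ℝ (Esp n))⁻¹| = 1 := by
    rw [finrank_euclideanSpace_fin, inv_pow, inv_inv, abs_of_pos (by positivity),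
      Real.rpow_neg ht.le, Real.rpow_natCast, inv_mul_cancel₀ (by positivity)]
  calc ∫⁻ x, ‖etaKer n t m x‖ₑ
      = ‖t ^ (-(n : ℝ))‖ₑ * ∫⁻ x : Esp n, ‖(1 + ‖t⁻¹ • x‖) ^ (-m)‖ₑ := by
        rw [← lintegral_const_mul _ (by fun_prop)]
        refine lintegral_congr fun x => ?_
        rw [etaKer, enorm_mul, norm_smul, Real.norm_of_nonneg (by positivity), div_eq_inv_mul]
    _ = ‖t ^ (-(n : ℝ))‖ₑ * ∫⁻ x, ‖(1 + ‖x‖) ^ (-m)‖ₑ ∂(volume.map (t⁻¹ • · : Esp n → Esp n)) := by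
        rw [lintegral_map (by fun_prop) (by fun_prop)]
    _ = ∫⁻ x : Esp n, ‖(1 + ‖x‖) ^ (-m)‖ₑ := by
        rw [hmap, lintegral_smul_measure, smul_eq_mul, ← mul_assoc,
          Real.enorm_of_nonneg (by positivity), ← ENNReal.ofReal_mul (by positivity),
          scaling_factor, ENNReal.ofReal_one, one_mul]

lemma exists_one_le_forall_lintegral_enorm_etaKer_le (hm : (n : ℝ) < m) :
    ∃ A : ℝ, 1 ≤ A ∧ ∀ t > 0, ∫⁻ x, ‖etaKer n t m x‖ₑ ≤ ENNReal.ofReal A := by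
  have mass_lt_top : ∫⁻ x : Esp n, ‖(1 + ‖x‖) ^ (-m)‖ₑ < ∞ := by
    have h (x : Esp n) : ‖(1 + ‖x‖) ^ (-m)‖ₑ = ENNReal.ofReal ((1 + ‖x‖) ^ (-m)) :=
      Real.enorm_of_nonneg (by positivity)
    simpa only [h] using finite_integral_one_add_norm (μ := volume) (by simpa using hm)
  refine ⟨max 1 (∫⁻ x : Esp n, ‖(1 + ‖x‖) ^ (-m)‖ₑ).toReal, le_max_left _ _, fun t ht => ?_⟩
  rw [lintegral_enorm_etaKer n m ht, ENNReal.le_ofReal_iff_toReal_le mass_lt_top.ne (by positivity)]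
  exact le_max_right _ _

end Kernel

section Exponents

lemma one_div_essSup_nonneg {α : Type*} [MeasurableSpace α] {μ : Measure α} [NeZero μ] {f : α → ℝ}
    (hf : ∀ x, 0 ≤ f x) (hbdd : IsBoundedUnder (· ≤ ·) (ae μ) f) : 0 ≤ 1 / essSup f μ := by
  obtain ⟨x, hx⟩ := (ae_le_essSup hbdd).exists
  exact one_div_nonneg.2 ((hf x).trans hx)

lemma ae_one_div_essSup_le_one_div {α : Type*} [MeasurableSpace α] {μ : Measure α} {f : α → ℝ}
    (hf : ∀ x, 0 < f x) (hbdd : IsBoundedUnder (· ≤ ·) (ae μ) f) :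
    ∀ᵐ x ∂μ, 1 / essSup f μ ≤ 1 / f x :=
  (ae_le_essSup hbdd).mono fun x => one_div_le_one_div_of_le (hf x)

/-- The decay exponent `ς(t)`, as a function of `pm = p⁻` and `κ = 1/p⁺`. Using the reciprocal of
`p⁺` includes the case `p⁺ = ∞`, where `κ = 0`. -/
def decayExponent (pm κ t : ℝ) : ℝ :=
  if (t ≤ 1 ∧ 2 ≤ pm ∧ pm ≤ 3) ∨ (1 < t ∧ 2 * κ < 1 - 1 / pm) then
    pm * κ * (1 - 1 / pm) + (if t ≤ 1 then 2 / pm else 2 * κ) * (1 - pm * κ)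
  else 1 - 1 / pm

variable {pm κ t : ℝ}

lemma two_div_sub_le_decayExponent (hpm : 2 ≤ pm) (hκ : 0 ≤ κ) (ht : t ≤ 1) :
    2 / pm - κ ≤ decayExponent pm κ t := by
  have hpm0 : 0 < pm := by linarith
  by_cases h3 : pm ≤ 3
  · have expand : pm * κ * (1 - 1 / pm) + 2 / pm * (1 - pm * κ) = 2 / pm + (pm - 3) * κ := by
      field_simp
      ring
    rw [decayExponent, if_pos (Or.inl ⟨ht, hpm, h3⟩), if_pos ht, expand]
    nlinarith
  · have three_div_le : 3 / pm ≤ 1 := (div_le_one hpm0).2 (by linarith)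
    rw [decayExponent, if_neg (by simp [h3, ht.not_gt])]
    linarith [show 3 / pm = 2 / pm + 1 / pm by ring]

lemma exists_rpow_sub_le_max_decayExponent {d : ℝ} (hd : 0 ≤ d) (hpm : 2 ≤ pm) (hκ : 0 ≤ κ)
    (ht : 0 < t) :
    ∃ r, 1 ≤ r ∧ 2 * r ≤ pm ∧ ∀ q, pm ≤ q → κ ≤ 1 / q →
      (t ^ (-d)) ^ (1 / r - 1 / q) ≤ max (t ^ (-d * decayExponent pm κ t)) (t ^ (-d / 2)) := by
  rcases le_or_gt t 1 with ht1 | ht1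
  · refine ⟨pm / 2, by linarith, by linarith, fun q _ hκq => le_max_of_le_left ?_⟩
    rw [← Real.rpow_mul ht.le]
    refine Real.rpow_le_rpow_of_exponent_ge ht ht1 (mul_le_mul_of_nonpos_left ?_ (by linarith))
    rw [one_div_div]
    linarith [two_div_sub_le_decayExponent hpm hκ ht1]
  · refine ⟨1, le_rfl, by linarith, fun q hq _ => le_max_of_le_right ?_⟩
    rw [← Real.rpow_mul ht.le, div_eq_mul_one_div]
    refine Real.rpow_le_rpow_of_exponent_le ht1.le (mul_le_mul_of_nonpos_left ?_ (by linarith))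
    linarith [one_div_le_one_div_of_le two_pos (hpm.trans hq)]

end Exponents

theorem statement11_general {n : ℕ} {m : ℝ} (hm : (n : ℝ) < m) {p : Esp n → ℝ} {pm κ : ℝ}
    (h2pm : 2 ≤ pm) (hpm : ∀ᵐ x, pm ≤ p x) (hκ0 : 0 ≤ κ) (hκ : ∀ᵐ x, κ ≤ 1 / p x) :
    ∃ C : ℝ, 0 < C ∧ ∀ t : ℝ, 0 < t → ∀ u v : Esp n → ℝ,
      MemVLp n p u → MemVLp n (fun _ => 2) u → MemVLp n p v → MemVLp n (fun _ => 2) v →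
      interNorm n p (convR n (etaKer n t m) fun x => u x * v x) ≤
        C * max (t ^ (-(n : ℝ) * decayExponent pm κ t)) (t ^ (-(n : ℝ) / 2)) *
          interNorm n p u * interNorm n p v := by
  have hn0 : (0 : ℝ) ≤ n := n.cast_nonneg
  obtain ⟨A, hA, hmass⟩ := exists_one_le_forall_lintegral_enorm_etaKer_le hm
  refine ⟨2 * A, by positivity, fun t ht u v hu hu2 hv hv2 => ?_⟩
  obtain ⟨r, hr, hrpm, hrT⟩ := exists_rpow_sub_le_max_decayExponent hn0 h2pm hκ0 ht
  set T := max (t ^ (-(n : ℝ) * decayExponent pm κ t)) (t ^ (-(n : ℝ) / 2))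
  have hT : 0 < T := lt_max_of_lt_right (by positivity)
  have bound {r : ℝ} {q : Esp n → ℝ} (hr : 1 ≤ r) (hrpm : 2 * r ≤ pm)
      (hq : ∀ᵐ x, r ≤ q x ∧ (t ^ (-(n : ℝ))) ^ (1 / r - 1 / q x) ≤ T) :=
    luxNorm_convR_mul_le (measurable_etaKer n t m) hA (hmass t ht)
      (abs_etaKer_le ht (hn0.trans hm.le)) hr (hpm.mono fun _ => hrpm.trans) hT hq hu hu2 hv hv2
  refine max_le (bound hr hrpm ?_) (bound le_rfl (by linarith) ?_)
  · filter_upwards [hpm, hκ] with x hpmx hκx using ⟨by linarith, hrT _ hpmx hκx⟩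
  · have half_le : (t ^ (-(n : ℝ))) ^ (1 / 1 - 1 / 2 : ℝ) ≤ T := by
      refine le_max_of_le_right (le_of_eq ?_)
      rw [← Real.rpow_mul ht.le]
      ring_nf
    exact .of_forall fun _ => ⟨one_le_two, half_le⟩

/-- Lemma 3.13, first estimate, of the paper: for `2 ≤ p⁻` and `p⁺ < ∞`,
`‖η_{t,m} * (uv)‖_{L^{p(·)} ∩ L^2} ≤ C max(t^{-nς(t)}, t^{-n/2}) ‖u‖_{L^{p(·)} ∩ L^2} ‖v‖_{L^{p(·)} ∩ L^2}`,
where `ζ(t) = 2/p⁻` for `0 < t ≤ 1`, `ζ(t) = 2/p⁺` for `t > 1`, and `ς` is the piecewise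
quantity of equation (3.13). -/
theorem statement11 (n : ℕ) (hn : 1 ≤ n) (m : ℝ) (hm : (n : ℝ) < m)
    (pexp : Esp n → ℝ) (hpmeas : Measurable pexp) (hp1 : ∀ x, 1 ≤ pexp x)
    (pm pp : ℝ) (hpm : pm = essInf pexp volume) (hpp : pp = essSup pexp volume)
    (hbdd : IsBoundedUnder (· ≤ ·) (ae (volume : Measure (Esp n))) pexp)
    (h2pm : 2 ≤ pm) :
    ∃ C : ℝ, 0 < C ∧ ∀ t : ℝ, 0 < t → ∀ u v : Esp n → ℝ,
      MemVLp n pexp u → MemVLp n (fun _ => (2 : ℝ)) u →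
      MemVLp n pexp v → MemVLp n (fun _ => (2 : ℝ)) v →
      max (luxNorm n pexp (convR n (etaKer n t m) (fun x => u x * v x)))
          (luxNorm n (fun _ => (2 : ℝ)) (convR n (etaKer n t m) (fun x => u x * v x))) ≤
        C * max
            (t ^ (-(n : ℝ) *
              (if (t ≤ 1 ∧ 2 ≤ pm ∧ pm ≤ 3) ∨ (1 < t ∧ 2 / pp < 1 - 1 / pm) then
                (pm / pp) * (1 - 1 / pm) +
                  (if t ≤ 1 then 2 / pm else 2 / pp) * (1 - pm / pp)
              else 1 - 1 / pm)))
            (t ^ (-(n : ℝ) / 2)) *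
          max (luxNorm n pexp u) (luxNorm n (fun _ => (2 : ℝ)) u) *
          max (luxNorm n pexp v) (luxNorm n (fun _ => (2 : ℝ)) v) := by
  subst hpm hpp
  simpa only [interNorm, decayExponent, div_eq_mul_inv, one_mul] using
    statement11_general hm h2pm
      (ae_essInf_le (isBoundedUnder_of_eventually_ge (.of_forall hp1)))
      (one_div_essSup_nonneg (fun x => zero_le_one.trans (hp1 x)) hbdd)
      (ae_one_div_essSup_le_one_div (fun x => one_pos.trans_le (hp1 x)) hbdd)
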